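/- Let G be a group, M an abelian group on which G acts by additive automorphisms, and T a nonempty set that is an additive torsor under M (with torsor subtraction −ᵥ : T × T → M and free transitive action +ᵥ : M × T → T), equipped with a G-action such that σ • (m +ᵥ t) = (σ • m) +ᵥ (σ • t) for all σ ∈ G, m ∈ M, t ∈ T. Let n be a positive integer such that the multiplication-by-n map M → M is surjective, and suppose there exist p ∈ T and P ∈ M such that n • (p −ᵥ σ • p) = σ • P − P for all σ ∈ G (i.e. the 1-cocycle σ ↦ p −ᵥ σ • p is killed by n in H¹(G, M)). Then there exists p₀ ∈ T such that n • (p₀ −ᵥ σ • p₀) = 0 for all σ ∈ G; in particular, p₀ −ᵥ σ • p₀ is a torsion element of M for every σ ∈ G. -/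

import Mathlib

/-- In a compatible `G`-torsor setup (abelian group `M` with a
`G`-action by additive automorphisms, `T` an additive torsor under `M` with a
compatible `G`-action), if multiplication by `n > 0` is surjective on `M` and the
cocycle `σ ↦ p -ᵥ σ • p` is killed by `n` (i.e. `n • (p -ᵥ σ • p) = σ • P - P`
for some `P ∈ M`), then there exists `p₀ ∈ T` with `n • (p₀ -ᵥ σ • p₀) = 0`
for all `σ ∈ G`; in particular `p₀ -ᵥ σ • p₀` is torsion for every `σ`. -/
theorem exists_point_with_torsion_cocycle
    {G M T : Type*} [Group G] [AddCommGroup M] [DistribMulAction G M]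
    [AddTorsor M T] [MulAction G T]
    (hcompat : ∀ (σ : G) (m : M) (t : T), σ • (m +ᵥ t) = (σ • m) +ᵥ (σ • t))
    (n : ℕ) (hn : 0 < n) (hsurj : Function.Surjective fun m : M => n • m)
    (p : T) (P : M) (hP : ∀ σ : G, n • (p -ᵥ σ • p) = σ • P - P) :
    ∃ p₀ : T, ∀ σ : G, n • (p₀ -ᵥ σ • p₀) = 0 := by
  obtain ⟨Q, hQ⟩ := hsurj P
  have hQ' : n • Q = P := hQ
  -- Translating `p` by an `n`-th division point `Q` of `P` changes `n` times the cocycle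
  -- by `P - σ • P`, which cancels the coboundary `σ • P - P`.
  refine ⟨Q +ᵥ p, fun σ => ?_⟩
  have hσ : n • (σ • Q) = σ • P := by
    rw [← hQ']
    exact (map_nsmul (DistribSMul.toAddMonoidHom M σ) n Q).symm
  rw [hcompat, vadd_vsub_vadd_comm, nsmul_add, nsmul_sub, hP, hQ', hσ]
  abel
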